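/- arXiv:1105.2343 — 3 statements merged into one kernel-verified Lean document; each statement's English description precedes it below -/
import Mathlib

section
/- The polynomial p(x,y,z) = x³ + 3x²z + 3xz² + z³ + 3xy + 3yz + y³ lies in 𝓗 (in 3 variables), has degree 3 and N(p) = 7, so that 2·deg(p) = N(p) − 1, yet p is not a sharp generalized Whitney polynomial. (Hence the characterization of equality by sharp generalized Whitney polynomials fails for n = 3.) -/
/-!
Writing `u = x + z`, the polynomial is `u³ + 3uy + y³`, which is `1` when `u + y = 1`; its degree and
its number of terms are read off from an explicit description of its support.

It is not sharp generalized Whitney because of the last step of a would-be derivation. A step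
applied to a polynomial `r` of degree `d` at a term `c·x^α` creates the terms `c·x^α·xᵢ` of degree
`d + 1`, where nothing of `r` can cancel them, so the result contains `x^α·xᵢ` for every `i`
(`IsSGW.eq_sum_X_or_exists_coeff_ne_zero`). The support of the polynomial contains no such triple:
the candidates for `x^α·x` are `x³, x²z, xz², xy`, and then `x^α·y` would be `x²y, xyz, yz², y²`.
-/

open MvPolynomial

/-- `𝓗`: polynomials with nonnegative coefficients that are `1`
on the hyperplane `x₁ + ⋯ + xₙ = 1`. -/
def InH (n : ℕ) (p : MvPolynomial (Fin n) ℝ) : Prop :=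
  (∀ α : Fin n →₀ ℕ, 0 ≤ p.coeff α) ∧
  ∀ x : Fin n → ℝ, (∑ i, x i) = 1 → eval x p = 1

/-- `N(p)`: the number of monomials of `p` with nonzero coefficient. -/
def Nmon {n : ℕ} (p : MvPolynomial (Fin n) ℝ) : ℕ := p.support.card

/-- Sharp generalized Whitney polynomials: the smallest set of polynomials
containing `s = x₁ + ⋯ + xₙ` and closed under replacing a term `c·x^α` of top
degree (`c ≠ 0`, `|α| = deg p`) by `c·x^α·s`. -/
inductive IsSGW (n : ℕ) : MvPolynomial (Fin n) ℝ → Prop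
  | base : IsSGW n (∑ i, X i)
  | step (p : MvPolynomial (Fin n) ℝ) (α : Fin n →₀ ℕ) (h : IsSGW n p)
      (hc : p.coeff α ≠ 0) (hdeg : (∑ i, α i) = p.totalDegree) :
      IsSGW n (p - monomial α (p.coeff α) + monomial α (p.coeff α) * ∑ i, X i)

/-- The exponent vector of the monomial `x^a y^b z^c`. -/
noncomputable def expo (a b c : ℕ) : Fin 3 →₀ ℕ := Finsupp.equivFunOnFinite.symm ![a, b, c]

lemma expo_inj {a b c a' b' c' : ℕ} :
    expo a b c = expo a' b' c' ↔ a = a' ∧ b = b' ∧ c = c' := by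
  simp [expo]

lemma eq_expo (β : Fin 3 →₀ ℕ) : β = expo (β 0) (β 1) (β 2) := by
  ext i; fin_cases i <;> simp [expo]

lemma expo_add_single (a b c : ℕ) (i : Fin 3) :
    expo a b c + Finsupp.single i 1 =
      expo (a + if i = 0 then 1 else 0) (b + if i = 1 then 1 else 0)
        (c + if i = 2 then 1 else 0) := by
  ext j; fin_cases i <;> fin_cases j <;> simp [expo]

lemma monomial_expo (a b c : ℕ) (r : ℝ) :
    monomial (expo a b c) r = C r * (X 0 ^ a * X 1 ^ b * X 2 ^ c) := by
  rw [monomial_eq, Finsupp.prod_fintype _ _ (by simp)]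
  simp [Fin.prod_univ_three, expo]

/-- The polynomial `p` of the theorem. -/
noncomputable def pol : MvPolynomial (Fin 3) ℝ :=
  X 0 ^ 3 + 3 * X 0 ^ 2 * X 2 + 3 * X 0 * X 2 ^ 2 + X 2 ^ 3 +
    3 * X 0 * X 1 + 3 * X 1 * X 2 + X 1 ^ 3

lemma pol_eq : pol =
    monomial (expo 3 0 0) 1 + monomial (expo 2 0 1) 3 + monomial (expo 1 0 2) 3 +
      monomial (expo 0 0 3) 1 + monomial (expo 1 1 0) 3 + monomial (expo 0 1 1) 3 +
      monomial (expo 0 3 0) 1 := by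
  have h : (C 3 : MvPolynomial (Fin 3) ℝ) = 3 := map_ofNat C 3
  simp only [monomial_expo, h, C_1, pol]
  ring

lemma coeff_pol (β : Fin 3 →₀ ℕ) : pol.coeff β =
    (if expo 3 0 0 = β then 1 else 0) + (if expo 2 0 1 = β then 3 else 0) +
      (if expo 1 0 2 = β then 3 else 0) + (if expo 0 0 3 = β then 1 else 0) +
      (if expo 1 1 0 = β then 3 else 0) + (if expo 0 1 1 = β then 3 else 0) +
      (if expo 0 3 0 = β then 1 else 0) := by
  simp only [pol_eq, coeff_add, coeff_monomial]

lemma coeff_pol_nonneg (β : Fin 3 →₀ ℕ) : 0 ≤ pol.coeff β := by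
  rw [coeff_pol]; positivity

lemma support_pol : pol.support =
    {expo 3 0 0, expo 2 0 1, expo 1 0 2, expo 0 0 3, expo 1 1 0, expo 0 1 1, expo 0 3 0} := by
  ext β
  rw [mem_support_iff, coeff_pol]
  simp only [Finset.mem_insert, Finset.mem_singleton, eq_comm (a := β)]
  constructor
  · contrapose!
    rintro ⟨h1, h2, h3, h4, h5, h6, h7⟩
    simp [h1, h2, h3, h4, h5, h6, h7]
  · rintro (h | h | h | h | h | h | h) <;> subst h <;> simp [expo_inj]

/-- A sharp generalized Whitney polynomial other than `s` contains all the terms created by the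
last step of its derivation. -/
lemma IsSGW.eq_sum_X_or_exists_coeff_ne_zero {n : ℕ} {q : MvPolynomial (Fin n) ℝ}
    (h : IsSGW n q) :
    q = ∑ i, X i ∨ ∃ α : Fin n →₀ ℕ, ∀ i, q.coeff (α + Finsupp.single i 1) ≠ 0 := by
  cases h with
  | base => exact Or.inl rfl
  | step r α h hc hdeg =>
    refine Or.inr ⟨α, fun i => ?_⟩
    have hr : r.coeff (α + Finsupp.single i 1) = 0 := by
      refine coeff_eq_zero_of_totalDegree_lt ?_
      rw [← hdeg]
      change _ < (α + Finsupp.single i 1).sum fun _ e => e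
      rw [Finsupp.sum_fintype _ _ (by simp)]
      simp [Finset.sum_add_distrib, Finsupp.single_apply]
    have hne : α ≠ α + Finsupp.single i 1 := by simp
    have hs : (∑ j, X j : MvPolynomial (Fin n) ℝ).coeff (Finsupp.single i 1) = 1 := by
      simp [coeff_sum, coeff_X, Finsupp.single_left_inj]
    rw [coeff_add, coeff_sub, hr, coeff_monomial, if_neg hne, coeff_monomial_mul, hs]
    simpa using hc

lemma not_isSGW_pol : ¬ IsSGW 3 pol := by
  intro h
  rcases h.eq_sum_X_or_exists_coeff_ne_zero with h | ⟨α, hα⟩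
  -- at `(1, 1, 1)` the two sides are `13` and `3`
  · have := congrArg (eval fun _ => 1) h
    norm_num [pol, Fin.sum_univ_three] at this
  · have h0 := mem_support_iff.mpr (hα 0)
    have h1 := mem_support_iff.mpr (hα 1)
    rw [eq_expo α, expo_add_single, support_pol] at h0 h1
    simp [expo_inj] at h0 h1
    omega

/-- the polynomial
`p(x,y,z) = x³ + 3x²z + 3xz² + z³ + 3xy + 3yz + y³` lies in `𝓗`, has degree
`3` and `N(p) = 7` (so `2·deg p = N(p) − 1`), yet it is not a sharp
generalized Whitney polynomial.  (Here `x = X 0`, `y = X 1`, `z = X 2`.) -/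
theorem stmt8 :
    let p : MvPolynomial (Fin 3) ℝ :=
      X 0 ^ 3 + 3 * X 0 ^ 2 * X 2 + 3 * X 0 * X 2 ^ 2 + X 2 ^ 3 +
        3 * X 0 * X 1 + 3 * X 1 * X 2 + X 1 ^ 3
    InH 3 p ∧ p.totalDegree = 3 ∧ Nmon p = 7 ∧
      2 * p.totalDegree = Nmon p - 1 ∧ ¬ IsSGW 3 p := by
  have hdeg : pol.totalDegree = 3 := by
    simp [totalDegree, support_pol, Finsupp.sum_fintype, Fin.sum_univ_three, expo]
  have hN : Nmon pol = 7 := by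
    simp [Nmon, support_pol, expo_inj]
  change InH 3 pol ∧ pol.totalDegree = 3 ∧ Nmon pol = 7 ∧
    2 * pol.totalDegree = Nmon pol - 1 ∧ ¬ IsSGW 3 pol
  refine ⟨⟨coeff_pol_nonneg, fun x hx => ?_⟩, hdeg, hN, ?_, not_isSGW_pol⟩
  · rw [Fin.sum_univ_three] at hx
    have hz : x 2 = 1 - x 0 - x 1 := by linarith
    simp [pol, hz]
    ring
  · rw [hdeg, hN]
end

section
/- Let n ≥ 2, let p ∈ 𝓗 in n variables be nonconstant, and let q be the polynomial with p − 1 = (s − 1)·q. Then the Newton diagram D of q has exactly one source, namely the origin α = (0,…,0), and every other node of D is a sink. -/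
/-! Extend the coefficients of `p` and `q` by zero to `ℤⁿ`. Comparing coefficients in
`p - 1 = (s - 1) q` at a point `α` of the positive quadrant gives
`p_α - [α = 0] = ∑ₖ q_{downₖ α} - q_α` (`coeff_relation`). At a source the right-hand side is
negative: every summand is `≤ 0`, and one of them is nonzero. If `α ≠ 0` the left-hand side is
`p_α ≥ 0`, so a source can only be the origin; a source outside the quadrant is impossible
because `α` and all `downₖ α` then lie outside it. At the origin the relation reads
`q_0 = 1 - p_0`, and `p_0 < 1` (`coeff_zero_lt_one`) follows by evaluating `p` at the barycentre
`(1/n, …, 1/n)`, where every monomial is positive: a nonconstant `p` has a positive coefficient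
other than `p_0`, and the nonnegative terms sum to `1`.
-/

open MvPolynomial

/-- `s = x₁ + ⋯ + xₙ`. -/
noncomputable def sPoly (n : ℕ) : MvPolynomial (Fin n) ℝ := ∑ i, X i

/-- `down_k`: subtract `1` from the `k`-th entry. -/
def downk {n : ℕ} (k : Fin n) (α : Fin n → ℤ) : Fin n → ℤ :=
  Function.update α k (α k - 1)

/-- A sink of a diagram `D : ℤⁿ → {P,0,N}`. -/
def IsSink {n : ℕ} (D : (Fin n → ℤ) → SignType) (α : Fin n → ℤ) : Prop :=
  D α ≤ 0 ∧ (∀ k, 0 ≤ D (downk k α)) ∧ (D α ≠ 0 ∨ ∃ k, D (downk k α) ≠ 0)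

/-- A source of a diagram `D : ℤⁿ → {P,0,N}`. -/
def IsSource {n : ℕ} (D : (Fin n → ℤ) → SignType) (α : Fin n → ℤ) : Prop :=
  0 ≤ D α ∧ (∀ k, D (downk k α) ≤ 0) ∧ (D α ≠ 0 ∨ ∃ k, D (downk k α) ≠ 0)

/-- A node: a sink or a source. -/
def IsNode {n : ℕ} (D : (Fin n → ℤ) → SignType) (α : Fin n → ℤ) : Prop :=
  IsSink D α ∨ IsSource D α

/-- The coefficient of `q` at a point of `ℤⁿ` (zero off the positive quadrant). -/
noncomputable def coeffZ {n : ℕ} (q : MvPolynomial (Fin n) ℝ)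
    (α : Fin n → ℤ) : ℝ :=
  if ∀ i, 0 ≤ α i then
    q.coeff (Finsupp.equivFunOnFinite.symm fun i => (α i).toNat)
  else 0

/-- The Newton diagram of `q`. -/
noncomputable def newton {n : ℕ} (q : MvPolynomial (Fin n) ℝ) :
    (Fin n → ℤ) → SignType :=
  fun α => SignType.sign (coeffZ q α)

/-- The multi-index in `ℕⁿ` attached to a point of `ℤⁿ`, with negative entries truncated to `0`. -/
noncomputable def toIndex {n : ℕ} (α : Fin n → ℤ) : Fin n →₀ ℕ :=
  Finsupp.equivFunOnFinite.symm fun i => (α i).toNat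

lemma coeffZ_of_nonneg {n : ℕ} (q : MvPolynomial (Fin n) ℝ) {α : Fin n → ℤ}
    (h : ∀ i, 0 ≤ α i) : coeffZ q α = q.coeff (toIndex α) :=
  if_pos h

lemma coeffZ_of_neg {n : ℕ} (q : MvPolynomial (Fin n) ℝ) {α : Fin n → ℤ} {j : Fin n}
    (h : α j < 0) : coeffZ q α = 0 :=
  if_neg fun h' => absurd (h' j) (not_le.mpr h)

lemma downk_neg {n : ℕ} {α : Fin n → ℤ} {j : Fin n} (h : α j < 0) (k : Fin n) :
    downk k α j < 0 := by
  rcases eq_or_ne j k with rfl | hjk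
  · simp only [downk, Function.update_self]; omega
  · simpa [downk, Function.update_of_ne hjk] using h

/-- Multiplication by `xₖ` shifts the extended coefficients along `downₖ`. -/
lemma coeffZ_downk {n : ℕ} (q : MvPolynomial (Fin n) ℝ) {α : Fin n → ℤ}
    (h : ∀ i, 0 ≤ α i) (k : Fin n) :
    coeffZ q (downk k α) = (X k * q).coeff (toIndex α) := by
  rw [coeff_X_mul']
  by_cases hk : α k = 0
  · have h1 : downk k α k < 0 := by simp [downk, hk]
    rw [coeffZ_of_neg q h1, if_neg]
    simp [toIndex, hk]
  · have hpos : 0 < α k := lt_of_le_of_ne (h k) (Ne.symm hk)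
    have h1 : ∀ i, 0 ≤ downk k α i := by
      intro i
      rcases eq_or_ne i k with rfl | hik
      · simp only [downk, Function.update_self]; omega
      · simpa [downk, Function.update_of_ne hik] using h i
    rw [coeffZ_of_nonneg q h1, if_pos]
    · congr 1
      ext i
      rcases eq_or_ne i k with rfl | hik
      · simp [toIndex, downk]
      · simp [toIndex, downk, hik]
    · simp [toIndex, hpos]

lemma coeff_relation {n : ℕ} {p q : MvPolynomial (Fin n) ℝ}
    (hq : p - 1 = (sPoly n - 1) * q) {α : Fin n → ℤ} (h : ∀ i, 0 ≤ α i) :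
    p.coeff (toIndex α) - (if 0 = toIndex α then 1 else 0)
      = ∑ k, coeffZ q (downk k α) - coeffZ q α := by
  have := congrArg (coeff (toIndex α)) hq
  rw [sub_mul, one_mul, sPoly, Finset.sum_mul, coeff_sub, coeff_sub, coeff_sum, coeff_one] at this
  simpa only [coeffZ_downk q h, coeffZ_of_nonneg q h] using this

lemma toIndex_eq_zero {n : ℕ} {α : Fin n → ℤ} (h : ∀ i, 0 ≤ α i) (h0 : 0 = toIndex α) :
    α = fun _ => 0 := by
  funext i
  have h1 := DFunLike.congr_fun h0 i
  have h2 := h i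
  simp only [toIndex, Finsupp.coe_zero, Pi.zero_apply, Finsupp.equivFunOnFinite_symm_apply_apply]
    at h1
  omega

lemma coeff_zero_lt_one {n : ℕ} (hn : 2 ≤ n) {p : MvPolynomial (Fin n) ℝ}
    (hp : InH n p) (hnc : p.totalDegree ≠ 0) : p.coeff 0 < 1 := by
  have hn0 : (0 : ℝ) < n := by exact_mod_cast (by omega : 0 < n)
  obtain ⟨m, hm, hm0⟩ : ∃ m ∈ p.support, m ≠ 0 := by
    by_contra! hcon
    refine hnc ((totalDegree_eq_zero_iff _ p).mpr fun m hm x => ?_)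
    simp [hcon m hm]
  have hev := hp.2 (fun _ => (1 / n : ℝ)) (by simp [hn0.ne'])
  rw [eval_eq] at hev
  have hmono : ∀ d : Fin n →₀ ℕ, 0 < ∏ i ∈ d.support, (1 / n : ℝ) ^ d i :=
    fun d => Finset.prod_pos fun i _ => by positivity
  have hm' : 0 < p.coeff m := lt_of_le_of_ne (hp.1 m) (mem_support_iff.mp hm).symm
  by_cases h0 : (0 : Fin n →₀ ℕ) ∈ p.support
  · rw [← hev]
    have := Finset.single_lt_sum (f := fun d => p.coeff d * ∏ i ∈ d.support, (1 / n : ℝ) ^ d i)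
      hm0 h0 hm (mul_pos hm' (hmono m)) (fun d _ _ => mul_nonneg (hp.1 d) (hmono d).le)
    simpa using this
  · rw [notMem_support_iff.mp h0]
    exact one_pos

lemma newton_nonneg {n : ℕ} {q : MvPolynomial (Fin n) ℝ} {α : Fin n → ℤ} :
    0 ≤ newton q α ↔ 0 ≤ coeffZ q α := sign_nonneg_iff

lemma newton_nonpos {n : ℕ} {q : MvPolynomial (Fin n) ℝ} {α : Fin n → ℤ} :
    newton q α ≤ 0 ↔ coeffZ q α ≤ 0 := sign_nonpos_iff

lemma newton_ne_zero {n : ℕ} {q : MvPolynomial (Fin n) ℝ} {α : Fin n → ℤ} :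
    newton q α ≠ 0 ↔ coeffZ q α ≠ 0 := sign_ne_zero

/-- if `p ∈ 𝓗` is nonconstant and `p − 1 = (s − 1)·q`, then the
Newton diagram of `q` has a unique source, at the origin, and every other node
is a sink. -/
theorem stmt10 (n : ℕ) (hn : 2 ≤ n) (p : MvPolynomial (Fin n) ℝ)
    (hp : InH n p) (hnc : p.totalDegree ≠ 0) (q : MvPolynomial (Fin n) ℝ)
    (hq : p - 1 = (sPoly n - 1) * q) :
    IsSource (newton q) (fun _ => 0) ∧
    (∀ α : Fin n → ℤ, IsSource (newton q) α → α = fun _ => 0) ∧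
    (∀ α : Fin n → ℤ, IsNode (newton q) α → α ≠ (fun _ => 0) →
      IsSink (newton q) α) := by
  have huniq : ∀ α : Fin n → ℤ, IsSource (newton q) α → α = fun _ => 0 := by
    rintro α ⟨h1, h2, h3⟩
    simp only [newton_nonneg, newton_nonpos, newton_ne_zero] at h1 h2 h3
    by_cases hα : ∀ i, 0 ≤ α i
    · by_contra hne
      have hrel := coeff_relation hq hα
      rw [if_neg fun h => hne (toIndex_eq_zero hα h), sub_zero] at hrel
      have hp0 := hp.1 (toIndex α)
      have hsum : ∑ k, coeffZ q (downk k α) ≤ 0 := Finset.sum_nonpos fun k _ => h2 k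
      rcases h3 with h3 | ⟨k, hk⟩
      · exact h3 (by linarith)
      · have hz : ∑ k, coeffZ q (downk k α) = 0 := by linarith
        exact hk ((Finset.sum_eq_zero_iff_of_nonpos fun k _ => h2 k).mp hz k (Finset.mem_univ k))
    · push Not at hα
      obtain ⟨j, hj⟩ := hα
      rcases h3 with h3 | ⟨k, hk⟩
      · exact absurd (coeffZ_of_neg q hj) h3
      · exact absurd (coeffZ_of_neg q (downk_neg hj k)) hk
  refine ⟨?_, huniq, fun α hnode hne => hnode.resolve_right fun hs => hne (huniq α hs)⟩
  have hdown : ∀ k, coeffZ q (downk k fun _ => 0) = 0 := fun k =>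
    coeffZ_of_neg q (j := k) (by simp [downk])
  have hidx : toIndex (fun _ : Fin n => (0 : ℤ)) = 0 := by ext i; simp [toIndex]
  have hrel := coeff_relation hq (α := fun _ => 0) fun _ => le_rfl
  rw [hidx, if_pos rfl, Finset.sum_eq_zero fun k _ => hdown k] at hrel
  have hlt := coeff_zero_lt_one hn hp hnc
  have hpos : 0 < coeffZ q fun _ => 0 := by linarith
  exact ⟨newton_nonneg.mpr hpos.le, fun k => newton_nonpos.mpr (hdown k).le,
    Or.inl (newton_ne_zero.mpr hpos.ne')⟩
end

section
/- Let n ≥ 3, let D be an n-dimensional diagram with support contained in ℤ≥0ⁿ, and let 1 ≤ k ≤ n−1, 1 ≤ m ≤ n with k ≠ m. Then #(V(D,k,m)) ≤ #(D). Moreover, if D has a unique source, located at the origin (so that all other nodes of D are sinks), then V(D,k,m) has a unique source, located at the origin, and all its other nodes are sinks. -/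
/-- `#(D)`: the number of nodes of `D`. -/
noncomputable def nodeCount {n : ℕ} (D : (Fin n → ℤ) → SignType) : ℕ :=
  Set.ncard {α | IsNode D α}

/-- `γ_{k,m}(α,a,b)`: replace the `k`-th entry of `α ∈ ℤⁿ⁻¹` by `a` and insert
`b` so that it becomes the `m`-th entry of the result. -/
def gammaPt {n : ℕ} (k : Fin n) (m : Fin (n + 1)) (α : Fin n → ℤ)
    (a b : ℤ) : Fin (n + 1) → ℤ :=
  m.insertNth b (Function.update α k a)

open Classical in
/-- The view `V(D,k,m)`: at `α ∈ ℤⁿ⁻¹` it takes the value `D(γ_{k,m}(α,a,b))`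
where `a + b = α_k` and `a` is the smallest integer making this value nonzero,
and `0` if no such `a` exists. -/
noncomputable def diagView {n : ℕ} (D : (Fin (n + 1) → ℤ) → SignType)
    (k : Fin n) (m : Fin (n + 1)) : (Fin n → ℤ) → SignType := fun α =>
  let S : Set ℤ := {a : ℤ | D (gammaPt k m α a (α k - a)) ≠ 0}
  if S.Nonempty then D (gammaPt k m α (sInf S) (α k - sInf S)) else 0

/-- The value of `D` at the point with parameter `a` on the line `a + b = α k` above `α`. -/
def lineVal {n : ℕ} (D : (Fin (n + 1) → ℤ) → SignType) (k : Fin n) (m : Fin (n + 1))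
    (α : Fin n → ℤ) (a : ℤ) : SignType :=
  D (gammaPt k m α a (α k - a))

/-! ### Points above `α` and their neighbours -/

section Geometry

variable {n : ℕ} (k : Fin n) (m : Fin (n + 1)) (α : Fin n → ℤ) (a b : ℤ)

lemma gammaPt_same : gammaPt k m α a b m = b := by
  simp [gammaPt]

lemma gammaPt_replaced : gammaPt k m α a b (m.succAbove k) = a := by
  simp [gammaPt]

lemma gammaPt_other {j : Fin n} (hj : j ≠ k) : gammaPt k m α a b (m.succAbove j) = α j := by
  simp [gammaPt, hj]

lemma downk_apply_same {n : ℕ} (i : Fin n) (β : Fin n → ℤ) : downk i β i = β i - 1 := by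
  simp [downk]

lemma downk_apply_ne {n : ℕ} {i j : Fin n} (h : j ≠ i) (β : Fin n → ℤ) : downk i β j = β j := by
  simp [downk, h]

lemma downk_gammaPt_same : downk m (gammaPt k m α a (α k - a))
    = gammaPt k m (downk k α) a (downk k α k - a) := by
  funext i
  rcases Fin.eq_self_or_eq_succAbove m i with rfl | ⟨j, rfl⟩
  · rw [downk_apply_same, gammaPt_same, gammaPt_same, downk_apply_same]; ring
  · rw [downk_apply_ne (Fin.succAbove_ne m j)]
    by_cases hj : j = k
    · subst hj; rw [gammaPt_replaced, gammaPt_replaced]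
    · rw [gammaPt_other _ _ _ _ _ hj, gammaPt_other _ _ _ _ _ hj, downk_apply_ne hj]

lemma downk_gammaPt_replaced : downk (m.succAbove k) (gammaPt k m α a (α k - a))
    = gammaPt k m (downk k α) (a - 1) (downk k α k - (a - 1)) := by
  funext i
  rcases Fin.eq_self_or_eq_succAbove m i with rfl | ⟨j, rfl⟩
  · rw [downk_apply_ne (Fin.succAbove_ne i k).symm, gammaPt_same, gammaPt_same, downk_apply_same]
    ring
  · by_cases hj : j = k
    · subst hj; rw [downk_apply_same, gammaPt_replaced, gammaPt_replaced]
    · rw [downk_apply_ne (fun h => hj (Fin.succAbove_right_injective h)),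
        gammaPt_other _ _ _ _ _ hj, gammaPt_other _ _ _ _ _ hj, downk_apply_ne hj]

lemma downk_gammaPt_other {l : Fin n} (hl : l ≠ k) :
    downk (m.succAbove l) (gammaPt k m α a (α k - a))
      = gammaPt k m (downk l α) a (downk l α k - a) := by
  funext i
  rcases Fin.eq_self_or_eq_succAbove m i with rfl | ⟨j, rfl⟩
  · rw [downk_apply_ne (Fin.succAbove_ne i l).symm, gammaPt_same, gammaPt_same,
      downk_apply_ne hl.symm]
  · by_cases hjl : j = l
    · subst hjl
      rw [downk_apply_same, gammaPt_other _ _ _ _ _ hl, gammaPt_other _ _ _ _ _ hl,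
        downk_apply_same]
    · rw [downk_apply_ne (fun h => hjl (Fin.succAbove_right_injective h))]
      by_cases hj : j = k
      · subst hj; rw [gammaPt_replaced, gammaPt_replaced]
      · rw [gammaPt_other _ _ _ _ _ hj, gammaPt_other _ _ _ _ _ hj, downk_apply_ne hjl]

/-- A point determines the `α` above which it lies. -/
lemma gammaPt_inj {α β : Fin n → ℤ} {a b : ℤ}
    (h : gammaPt k m α a (α k - a) = gammaPt k m β b (β k - b)) : α = β := by
  have h1 := congrFun h m
  have h2 := congrFun h (m.succAbove k)
  rw [gammaPt_same, gammaPt_same] at h1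
  rw [gammaPt_replaced, gammaPt_replaced] at h2
  funext j
  by_cases hj : j = k
  · subst hj; omega
  · have h3 := congrFun h (m.succAbove j)
    rwa [gammaPt_other _ _ _ _ _ hj, gammaPt_other _ _ _ _ _ hj] at h3

end Geometry

/-! ### Lifting nodes of the view -/

section View

variable {n : ℕ} {D : (Fin (n + 1) → ℤ) → SignType} {k : Fin n} {m : Fin (n + 1)}

lemma nonneg_of_lineVal_ne (hpos : ∀ α ∈ Function.support D, ∀ i, 0 ≤ α i)
    {α : Fin n → ℤ} {a : ℤ} (h : lineVal D k m α a ≠ 0) : 0 ≤ a := by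
  have := hpos _ h (m.succAbove k)
  rwa [gammaPt_replaced] at this

lemma exists_of_diagView_ne {α : Fin n → ℤ} (h : diagView D k m α ≠ 0) :
    ∃ a, lineVal D k m α a ≠ 0 := by
  unfold diagView at h
  by_contra hc
  have hS : ¬ {a : ℤ | D (gammaPt k m α a (α k - a)) ≠ 0}.Nonempty := fun ⟨a, ha⟩ => hc ⟨a, ha⟩
  simp only [if_neg hS] at h
  exact h rfl

lemma diagView_eq_of_first {α : Fin n → ℤ} {a : ℤ} (ha : lineVal D k m α a ≠ 0)
    (hlt : ∀ a' < a, lineVal D k m α a' = 0) : lineVal D k m α a = diagView D k m α := by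
  have hleast : IsLeast {a : ℤ | D (gammaPt k m α a (α k - a)) ≠ 0} a :=
    ⟨ha, fun a' ha' => not_lt.1 fun h => ha' (hlt a' h)⟩
  unfold diagView
  simp only [if_pos hleast.nonempty, hleast.csInf_eq]
  rfl

/-- A point of `D` above a point `α` that sees a nonzero value of the view: the values of `D` at it
and its neighbours are zero or inherited from the view at `α` and its neighbours, and not all are
zero. -/
lemma exists_lift (hpos : ∀ α ∈ Function.support D, ∀ i, 0 ≤ α i) (α : Fin n → ℤ)
    (hα : diagView D k m α ≠ 0 ∨ ∃ j, diagView D k m (downk j α) ≠ 0) :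
    ∃ a, ∃ γ, γ = gammaPt k m α a (α k - a) ∧
      (D γ = 0 ∨ D γ = diagView D k m α) ∧
      (∀ i, D (downk i γ) = 0 ∨ ∃ j, D (downk i γ) = diagView D k m (downk j α)) ∧
      (D γ ≠ 0 ∨ ∃ i, D (downk i γ) ≠ 0) := by
  obtain ⟨a, ha, hmin⟩ := Int.exists_least_of_bdd
    (P := fun a => lineVal D k m α a ≠ 0 ∨ ∃ j, lineVal D k m (downk j α) a ≠ 0)
    ⟨0, by
      rintro z (h | ⟨j, h⟩)
      · exact nonneg_of_lineVal_ne hpos h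
      · exact nonneg_of_lineVal_ne hpos h⟩
    (by
      rcases hα with h | ⟨j, h⟩
      · obtain ⟨a, ha⟩ := exists_of_diagView_ne h
        exact ⟨a, Or.inl ha⟩
      · obtain ⟨a, ha⟩ := exists_of_diagView_ne h
        exact ⟨a, Or.inr ⟨j, ha⟩⟩)
  have h0 : ∀ a' < a, lineVal D k m α a' = 0 := fun a' h => by
    by_contra hc
    exact absurd (hmin a' (Or.inl hc)) (not_le.2 h)
  have h1 : ∀ j, ∀ a' < a, lineVal D k m (downk j α) a' = 0 := fun j a' h => by
    by_contra hc
    exact absurd (hmin a' (Or.inr ⟨j, hc⟩)) (not_le.2 h)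
  refine ⟨a, _, rfl, ?_, ?_, ?_⟩
  · by_cases h : lineVal D k m α a = 0
    · exact Or.inl h
    · exact Or.inr (diagView_eq_of_first h h0)
  · have key : ∀ j, lineVal D k m (downk j α) a = 0 ∨
        ∃ j', lineVal D k m (downk j α) a = diagView D k m (downk j' α) := fun j => by
      by_cases h : lineVal D k m (downk j α) a = 0
      · exact Or.inl h
      · exact Or.inr ⟨j, diagView_eq_of_first h (h1 j)⟩
    intro i
    rcases Fin.eq_self_or_eq_succAbove m i with rfl | ⟨l, rfl⟩
    · rw [downk_gammaPt_same]
      exact key k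
    · by_cases hl : l = k
      · subst hl
        rw [downk_gammaPt_replaced]
        exact Or.inl (h1 l (a - 1) (by omega))
      · rw [downk_gammaPt_other _ _ _ _ hl]
        exact key l
  · rcases ha with h | ⟨j, h⟩
    · exact Or.inl h
    · right
      by_cases hj : j = k
      · subst hj
        exact ⟨m, by rw [downk_gammaPt_same]; exact h⟩
      · exact ⟨m.succAbove j, by rw [downk_gammaPt_other _ _ _ _ hj]; exact h⟩

lemma exists_lift_sink (hpos : ∀ α ∈ Function.support D, ∀ i, 0 ≤ α i) {α : Fin n → ℤ}
    (h : IsSink (diagView D k m) α) : ∃ a, IsSink D (gammaPt k m α a (α k - a)) := by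
  obtain ⟨a, _, rfl, h1, h2, h3⟩ := exists_lift hpos α h.2.2
  refine ⟨a, ?_, fun i => ?_, h3⟩
  · rcases h1 with h1 | h1
    · exact h1.le
    · exact h1 ▸ h.1
  · rcases h2 i with h2 | ⟨j, h2⟩
    · exact h2.ge
    · exact h2 ▸ h.2.1 j

lemma exists_lift_source (hpos : ∀ α ∈ Function.support D, ∀ i, 0 ≤ α i) {α : Fin n → ℤ}
    (h : IsSource (diagView D k m) α) : ∃ a, IsSource D (gammaPt k m α a (α k - a)) := by
  obtain ⟨a, _, rfl, h1, h2, h3⟩ := exists_lift hpos α h.2.2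
  refine ⟨a, ?_, fun i => ?_, h3⟩
  · rcases h1 with h1 | h1
    · exact h1.ge
    · exact h1 ▸ h.1
  · rcases h2 i with h2 | ⟨j, h2⟩
    · exact h2.le
    · exact h2 ▸ h.2.1 j

end View

/-! ### Finiteness of the set of nodes -/

lemma downk_injective {n : ℕ} (i : Fin n) : Function.Injective (downk i) := by
  intro α β h
  funext j
  have hj := congrFun h j
  by_cases hji : j = i
  · subst hji
    rw [downk_apply_same, downk_apply_same] at hj
    omega
  · rwa [downk_apply_ne hji, downk_apply_ne hji] at hj

lemma finite_nodes {n : ℕ} {D : (Fin n → ℤ) → SignType} (hfin : (Function.support D).Finite) :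
    {α | IsNode D α}.Finite := by
  refine (hfin.union (Set.finite_iUnion fun i =>
    hfin.preimage (f := downk i) (downk_injective i).injOn)).subset ?_
  intro α hα
  have h : D α ≠ 0 ∨ ∃ i, D (downk i α) ≠ 0 := hα.elim (fun h => h.2.2) (fun h => h.2.2)
  rcases h with h | ⟨i, h⟩
  · exact Or.inl h
  · exact Or.inr (Set.mem_iUnion.2 ⟨i, h⟩)

/-- stated for dimension `n + 1 ≥ 3`:  `#(V(D,k,m)) ≤ #(D)`,
and if `D` has a unique source located at the origin, so does `V(D,k,m)`
(and then all other nodes of the view are sinks, nodes being sinks or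
sources). -/
theorem stmt13 (n : ℕ) (hn : 3 ≤ n + 1) (D : (Fin (n + 1) → ℤ) → SignType)
    (hfin : (Function.support D).Finite)
    (hpos : ∀ α ∈ Function.support D, ∀ i, 0 ≤ α i)
    (k : Fin n) (m : Fin (n + 1)) (hkm : (k : ℕ) ≠ (m : ℕ)) :
    nodeCount (diagView D k m) ≤ nodeCount D ∧
    ((IsSource D (fun _ => 0) ∧
        ∀ α : Fin (n + 1) → ℤ, IsSource D α → α = fun _ => 0) →
      (IsSource (diagView D k m) (fun _ => 0) ∧
        ∀ α : Fin n → ℤ, IsSource (diagView D k m) α → α = fun _ => 0)) := by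
  constructor
  · have hlift : ∀ α, IsNode (diagView D k m) α →
        ∃ a, IsNode D (gammaPt k m α a (α k - a)) := by
      rintro α (h | h)
      · obtain ⟨a, ha⟩ := exists_lift_sink hpos h
        exact ⟨a, Or.inl ha⟩
      · obtain ⟨a, ha⟩ := exists_lift_source hpos h
        exact ⟨a, Or.inr ha⟩
    choose! f hf using hlift
    exact Set.ncard_le_ncard_of_injOn (fun α => gammaPt k m α (f α) (α k - f α)) hf
      (fun α _ β _ h => gammaPt_inj k m h) (finite_nodes hfin)
  · rintro ⟨hs, huniq⟩
    have hneg : ∀ i, D (downk i fun _ => 0) = 0 := fun i => by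
      by_contra hc
      have := hpos _ hc i
      rw [downk_apply_same] at this
      omega
    have hD0 : D (fun _ => 0) ≠ 0 := by
      rcases hs.2.2 with h | ⟨i, h⟩
      · exact h
      · exact absurd (hneg i) h
    have hγ0 : gammaPt k m (fun _ => 0) 0 (0 - 0) = fun _ => 0 := by
      funext i
      rcases Fin.eq_self_or_eq_succAbove m i with rfl | ⟨j, rfl⟩
      · rw [gammaPt_same]; rfl
      · by_cases hj : j = k
        · subst hj; rw [gammaPt_replaced]
        · rw [gammaPt_other _ _ _ _ _ hj]
    have hl0 : lineVal D k m (fun _ => 0) 0 = D (fun _ => 0) := by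
      simp only [lineVal, hγ0]
    have hV0 : diagView D k m (fun _ => 0) = D (fun _ => 0) := by
      rw [← hl0]
      refine (diagView_eq_of_first (hl0 ▸ hD0) fun a' ha' => ?_).symm
      by_contra hc
      exact absurd (nonneg_of_lineVal_ne hpos hc) (not_le.2 ha')
    have hVneg : ∀ j, diagView D k m (downk j fun _ => 0) = 0 := fun j => by
      by_contra hc
      obtain ⟨a, ha⟩ := exists_of_diagView_ne hc
      by_cases hj : j = k
      · subst hj
        -- The line above `downk k 0` has `a + b = -1`, so it misses the nonnegative orthant.
        have h1 := nonneg_of_lineVal_ne hpos ha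
        have h2 := hpos _ ha m
        rw [gammaPt_same, downk_apply_same] at h2
        omega
      · have h2 := hpos _ ha (m.succAbove j)
        rw [gammaPt_other _ _ _ _ _ hj, downk_apply_same] at h2
        omega
    refine ⟨⟨hV0 ▸ hs.1, fun j => (hVneg j).le, Or.inl (hV0 ▸ hD0)⟩, fun α hα => ?_⟩
    obtain ⟨a, ha⟩ := exists_lift_source hpos hα
    exact gammaPt_inj k m (a := a) (b := 0) ((huniq _ ha).trans hγ0.symm)
end
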